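/- For every σ ∈ ℓ²(ℤ,ℂ) and every m ∈ ℤ, the family (1 + σ_j/(j − m))_{j∈ℤ, j≠m} is multipliable, and writing ∏_{j≠m}(1 + σ_j/(j − m)) = 1 + r_m(σ), one has |r_m(σ)| ≤ 2‖σ‖ · exp(2‖σ‖). -/

import Mathlib

lemma aux_zeta : HasSum (fun n : ℤ => (1 : ℝ) / (n : ℝ) ^ 2) (Real.pi ^ 2 / 3) := by
  have h := hasSum_zeta_two
  have h2 := HasSum.of_nat_of_neg (f := fun n : ℤ => (1 : ℝ) / (n : ℝ) ^ 2)
    (by simpa using h) (by simpa using h)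
  have e : Real.pi ^ 2 / 6 + Real.pi ^ 2 / 6 - (1 : ℝ) / (((0 : ℤ) : ℝ)) ^ 2
      = Real.pi ^ 2 / 3 := by
    rw [Int.cast_zero, zero_pow two_ne_zero, div_zero]
    ring
  rw [← e]
  exact h2

lemma aux_fin (σ : ℤ → ℂ) (hσ : Summable fun j => ‖σ j‖ ^ 2) (m : ℤ)
    (t : Finset {j : ℤ // j ≠ m}) :
    ∑ j ∈ t, ‖σ (j : ℤ) / (((j : ℤ) - m : ℤ) : ℂ)‖ ≤ 2 * Real.sqrt (∑' j, ‖σ j‖ ^ 2) := by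
  have h1 : ∑ j ∈ t, ‖σ (j : ℤ)‖ ^ 2 ≤ ∑' j, ‖σ j‖ ^ 2 := by
    have := hσ.sum_le_tsum (t.map (Function.Embedding.subtype _)) (fun i _ => by positivity)
    simpa using this
  have h2 : ∑ j ∈ t, (1 / (((j : ℤ) - m : ℤ) : ℝ)) ^ 2 ≤ 2 ^ 2 := by
    have hs : HasSum (fun n : ℤ => (1 : ℝ) / ((n - m : ℤ) : ℝ) ^ 2) (Real.pi ^ 2 / 3) := by
      have h0 := (Equiv.hasSum_iff (Equiv.subRight m)).mpr aux_zeta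
      simpa only [Function.comp_def, Equiv.subRight_apply] using h0
    have := sum_le_hasSum (t.map (Function.Embedding.subtype _)) (fun i _ => by positivity) hs
    have hp : Real.pi ^ 2 / 3 ≤ 2 ^ 2 := by
      nlinarith [Real.pi_lt_d2, Real.pi_pos]
    refine le_trans ?_ (this.trans hp)
    simp
  have h3 := Real.sum_mul_le_sqrt_mul_sqrt t (fun j => ‖σ (j : ℤ)‖)
    (fun j => |1 / (((j : ℤ) - m : ℤ) : ℝ)|)
  simp only [sq_abs] at h3
  calc _ = ∑ j ∈ t, ‖σ (j : ℤ)‖ * |1 / (((j : ℤ) - m : ℤ) : ℝ)| := by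
        refine Finset.sum_congr rfl fun j _ => ?_
        rw [norm_div, Complex.norm_intCast, abs_div, abs_one, mul_one_div]
    _ ≤ _ := h3
    _ ≤ Real.sqrt (∑' j, ‖σ j‖ ^ 2) * 2 := by
        gcongr
        exact Real.sqrt_le_iff.mpr ⟨by norm_num, h2⟩
    _ = _ := mul_comm _ _

/-- For every `σ ∈ ℓ²(ℤ,ℂ)` and every `m ∈ ℤ`, the family `(1 + σ j / (j - m))_{j ≠ m}`
is multipliable and, writing `∏_{j ≠ m} (1 + σ j / (j - m)) = 1 + r_m(σ)`, one has
`|r_m(σ)| ≤ 2‖σ‖ exp (2‖σ‖)`. -/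
theorem stmt_3 (σ : ℤ → ℂ) (hσ : Summable fun j => ‖σ j‖ ^ 2) (m : ℤ) :
    Multipliable (fun j : {j : ℤ // j ≠ m} => 1 + σ (j : ℤ) / (((j : ℤ) - m : ℤ) : ℂ)) ∧
    ‖(∏' j : {j : ℤ // j ≠ m}, (1 + σ (j : ℤ) / (((j : ℤ) - m : ℤ) : ℂ))) - 1‖ ≤
      2 * Real.sqrt (∑' j, ‖σ j‖ ^ 2) * Real.exp (2 * Real.sqrt (∑' j, ‖σ j‖ ^ 2)) := by
  have hb := aux_fin σ hσ m
  have hs : Summable (fun j : {j : ℤ // j ≠ m} => ‖σ (j : ℤ) / (((j : ℤ) - m : ℤ) : ℂ)‖) :=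
    summable_of_sum_le (fun _ => norm_nonneg _) hb
  have hm := multipliable_one_add_of_summable hs
  refine ⟨hm, ?_⟩
  set B := 2 * Real.sqrt (∑' j, ‖σ j‖ ^ 2)
  refine le_of_tendsto ((hm.hasProd.sub_const 1).norm) (Filter.Eventually.of_forall fun t => ?_)
  refine (t.norm_prod_one_add_sub_one_le _).trans ?_
  have h1 := Real.exp_le_exp.mpr (hb t)
  have h2 : Real.exp B * Real.exp (-B) = 1 := by rw [← Real.exp_add]; simp
  have h3 := Real.add_one_le_exp (-B)
  have h4 := Real.exp_pos B
  nlinarith
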